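/- Let p ≥ 2, I = {1 = i₁ < ⋯ < i_p} ⊆ {1,…,m} and J = {j₁ < ⋯ < j_p = n} ⊆ {1,…,n}, and set I' = I∖{1}, J' = J∖{n}. Then in O_q(M_{m,n})[X_{1n}⁻¹], the quantum minor [I'|J']' of the matrix X' satisfies [I'|J']' = (−q)^{1−p}[I|J]X_{1n}⁻¹ = (−q)^{1−p}X_{1n}⁻¹[I|J]. -/

import Mathlib

noncomputable section
open scoped BigOperators

/-- The defining relations of an `m × n` `q`-quantum matrix. -/
def IsQMat {k A : Type*} [Field k] [Ring A] [Algebra k A] (q : k) {m n : ℕ}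
    (X : Fin m → Fin n → A) : Prop :=
  (∀ (i : Fin m) (j l : Fin n), j < l → X i j * X i l = q • (X i l * X i j)) ∧
  (∀ (i r : Fin m) (j : Fin n), i < r → X i j * X r j = q • (X r j * X i j)) ∧
  (∀ (i r : Fin m) (j l : Fin n), i < r → j < l → X i l * X r j = X r j * X i l) ∧
  (∀ (i r : Fin m) (j l : Fin n), i < r → j < l →
    X i j * X r l - X r l * X i j = (q - q⁻¹) • (X i l * X r j))

/-- The relations defining `O_q(M_{m,n})` as a quotient of the free algebra. -/
inductive QMRel (k : Type*) [Field k] (q : k) (m n : ℕ) :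
    FreeAlgebra k (Fin m × Fin n) → FreeAlgebra k (Fin m × Fin n) → Prop
  | row (i : Fin m) (j l : Fin n) (h : j < l) :
      QMRel k q m n (FreeAlgebra.ι k (i, j) * FreeAlgebra.ι k (i, l))
        (q • (FreeAlgebra.ι k (i, l) * FreeAlgebra.ι k (i, j)))
  | col (i r : Fin m) (j : Fin n) (h : i < r) :
      QMRel k q m n (FreeAlgebra.ι k (i, j) * FreeAlgebra.ι k (r, j))
        (q • (FreeAlgebra.ι k (r, j) * FreeAlgebra.ι k (i, j)))
  | anti (i r : Fin m) (j l : Fin n) (h1 : i < r) (h2 : j < l) :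
      QMRel k q m n (FreeAlgebra.ι k (i, l) * FreeAlgebra.ι k (r, j))
        (FreeAlgebra.ι k (r, j) * FreeAlgebra.ι k (i, l))
  | diag (i r : Fin m) (j l : Fin n) (h1 : i < r) (h2 : j < l) :
      QMRel k q m n (FreeAlgebra.ι k (i, j) * FreeAlgebra.ι k (r, l))
        (FreeAlgebra.ι k (r, l) * FreeAlgebra.ι k (i, j) +
          (q - q⁻¹) • (FreeAlgebra.ι k (i, l) * FreeAlgebra.ι k (r, j)))

/-- The quantum matrix algebra `O_q(M_{m,n})`. -/
abbrev OqM (k : Type*) [Field k] (q : k) (m n : ℕ) := RingQuot (QMRel k q m n)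

/-- The canonical generators `X_{ij}` of `O_q(M_{m,n})`. -/
def qX (k : Type*) [Field k] (q : k) (m n : ℕ) (i : Fin m) (j : Fin n) : OqM k q m n :=
  RingQuot.mkAlgHom k (QMRel k q m n) (FreeAlgebra.ι k (i, j))

/-- The number of inversions (the length `ℓ(σ)`) of a permutation of `Fin t`. -/
def invCount {t : ℕ} (σ : Equiv.Perm (Fin t)) : ℕ :=
  Finset.card (Finset.univ.filter (fun p : Fin t × Fin t => p.1 < p.2 ∧ σ p.2 < σ p.1))

/-- The quantum determinant of a `t × t` matrix with entries in an algebra: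
`Σ_σ (-q)^{ℓ(σ)} M_{1,σ(1)} ⋯ M_{t,σ(t)}`. -/
def qdet {k : Type*} [Field k] {A : Type*} [Ring A] [Algebra k A] (q : k) {t : ℕ}
    (M : Fin t → Fin t → A) : A :=
  ∑ σ : Equiv.Perm (Fin t), ((-q) ^ invCount σ) • (List.ofFn (fun i => M i (σ i))).prod

/-- The quantum minor `[I|J]` of the matrix `X` on rows `I` and columns `J`. -/
def qminor {k : Type*} [Field k] {A : Type*} [Ring A] [Algebra k A] (q : k) {m n t : ℕ}
    (X : Fin m → Fin n → A) (I : Finset (Fin m)) (J : Finset (Fin n))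
    (hI : I.card = t) (hJ : J.card = t) : A :=
  qdet q (fun a b => X (I.orderIsoOfFin hI a) (J.orderIsoOfFin hJ b))

/-- The elements `X'_{ij} = X_{ij} - q⁻¹ X_{1j} X_{in} X_{1n}⁻¹` in a localisation of
`O_q(M_{m,n})` at the normal element `X_{1n}`, where `φ` is the localisation map and
`u = X_{1n}⁻¹`. -/
def Xp {k B : Type*} [Field k] [Ring B] [Algebra k B] (q : k) {m n : ℕ}
    (hm : 0 < m) (hn : 0 < n) (φ : OqM k q m n →ₐ[k] B) (u : B)
    (i : Fin m) (j : Fin n) : B :=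
  φ (qX k q m n i j) -
    q⁻¹ • (φ (qX k q m n ⟨0, hm⟩ j) * φ (qX k q m n i ⟨n - 1, by omega⟩) * u)

/-!
Adding a right multiple of the first row of a quantum matrix to a lower row does not change the
quantum determinant. By additivity it suffices that the determinant vanishes once row `r` is
replaced by `X₁ c`, the rows above `r` being those of `X`. For two adjacent rows, pairing `σ` with
`σ s`, `s` the adjacent transposition, writes the determinant through the `2 × 2` quantum minors of
these rows. Such a minor of `X_i` above `X₁` is `-q` times the one of `X₁` above `X_i`, so the
multiple of `X₁` moves up until it lies just below `X₁`, where the minors are zero.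

Subtracting `X₁ · q⁻¹ X_{in} X_{1n}⁻¹` from row `i` for each `i > 1` clears the last column below
`X_{1n}`. Only permutations sending the first row to the last column remain, which gives
`[I|J] = (-q)^{p-1} X_{1n} [I'|J']'`; the second formula holds because `X_{1n}` commutes with `X'`.
-/

theorem exists_prod_ofFn_eq_mul_adjacent_mul {A : Type*} [Monoid A] {t : ℕ} (i : Fin t)
    (g : Fin (t + 1) → A) :
    ∃ L R : A, ∀ f : Fin (t + 1) → A, (∀ j, j ≠ i.castSucc → j ≠ i.succ → f j = g j) →
      (List.ofFn f).prod = L * (f i.castSucc * f i.succ) * R := by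
  induction t with
  | zero => exact i.elim0
  | succ t ih =>
    cases i using Fin.cases with
    | zero =>
      refine ⟨1, (List.ofFn fun j : Fin t => g j.succ.succ).prod, fun f hf => ?_⟩
      have htail : (fun j : Fin t => f j.succ.succ) = fun j => g j.succ.succ :=
        funext fun j => hf _ (Fin.succ_ne_zero _) (by simp [Fin.ext_iff])
      rw [List.ofFn_succ, List.ofFn_succ, List.prod_cons, List.prod_cons, htail, one_mul,
        mul_assoc, Fin.castSucc_zero]
    | succ i =>
      obtain ⟨L, R, hLR⟩ := ih i (Fin.tail g)
      refine ⟨g 0 * L, R, fun f hf => ?_⟩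
      have htail := hLR (Fin.tail f) fun j hj hj' => hf j.succ
        (by rwa [← Fin.succ_castSucc, Ne, Fin.succ_inj]) (by rwa [Ne, Fin.succ_inj])
      have hhead : f 0 = g 0 := hf 0 (by simp [Fin.ext_iff]) (by simp [Fin.ext_iff])
      rw [List.ofFn_succ, List.prod_cons, hhead, ← Fin.succ_castSucc]
      exact (congrArg (g 0 * ·) htail).trans (by simp only [Fin.tail, mul_assoc])

section Inversions

variable {t : ℕ}

/-- The inversions of `σ`, as pairs of positions listed in increasing order. -/
def inversions (σ : Equiv.Perm (Fin t)) : Finset (Fin t × Fin t) :=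
  Finset.univ.filter fun p => p.1 < p.2 ∧ σ p.2 < σ p.1

theorem mem_inversions {σ : Equiv.Perm (Fin t)} {x y : Fin t} :
    (x, y) ∈ inversions σ ↔ x < y ∧ σ y < σ x := by
  simp [inversions]

theorem invCount_eq_card_inversions (σ : Equiv.Perm (Fin t)) :
    invCount σ = (inversions σ).card :=
  rfl

theorem swap_castSucc_succ_lt (i : Fin t) {x y : Fin (t + 1)} (hxy : x < y)
    (hne : ¬ (x = i.castSucc ∧ y = i.succ)) :
    Equiv.swap i.castSucc i.succ x < Equiv.swap i.castSucc i.succ y := by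
  simp only [Equiv.swap_apply_def, Fin.lt_def, Fin.ext_iff, apply_ite Fin.val, Fin.val_castSucc,
    Fin.val_succ] at *
  split_ifs <;> omega

theorem inversions_mul_swap {σ : Equiv.Perm (Fin (t + 1))} {i : Fin t}
    (h : σ i.castSucc < σ i.succ) :
    inversions (σ * Equiv.swap i.castSucc i.succ) =
      insert (i.castSucc, i.succ) ((inversions σ).map
        (Equiv.prodCongr (Equiv.swap i.castSucc i.succ)
          (Equiv.swap i.castSucc i.succ)).toEmbedding) := by
  ext ⟨x, y⟩
  rw [Finset.mem_insert, Finset.mem_map_equiv, Prod.mk.injEq]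
  by_cases hxy : x = i.castSucc ∧ y = i.succ
  · simp [hxy, mem_inversions, h]
  · simp only [hxy, false_or, Equiv.prodCongr_symm, Equiv.symm_swap, Equiv.prodCongr_apply,
      Prod.map, mem_inversions, Equiv.Perm.mul_apply]
    refine and_congr_left fun hσ => ⟨fun hlt => swap_castSucc_succ_lt i hlt hxy, fun hlt => ?_⟩
    have hne : ¬ (Equiv.swap i.castSucc i.succ x = i.castSucc ∧
        Equiv.swap i.castSucc i.succ y = i.succ) := fun ⟨hx, hy⟩ =>
      lt_asymm h (by rwa [hx, hy] at hσ)
    simpa using swap_castSucc_succ_lt i hlt hne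

theorem invCount_mul_swap {σ : Equiv.Perm (Fin (t + 1))} {i : Fin t}
    (h : σ i.castSucc < σ i.succ) :
    invCount (σ * Equiv.swap i.castSucc i.succ) = invCount σ + 1 := by
  rw [invCount_eq_card_inversions, inversions_mul_swap h, Finset.card_insert_of_notMem,
    Finset.card_map, invCount_eq_card_inversions]
  simp [Finset.mem_map_equiv, mem_inversions, Fin.castSucc_lt_succ.le]

/-- The permutation of `Fin (t + 1)` given in one-line notation by `t, τ 0, …, τ (t - 1)`. -/
def consLast (τ : Equiv.Perm (Fin t)) : Equiv.Perm (Fin (t + 1)) :=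
  (finRotate (t + 1)).symm * Equiv.Perm.decomposeFin.symm (0, τ)

theorem consLast_zero (τ : Equiv.Perm (Fin t)) : consLast τ 0 = Fin.last t := by
  rw [consLast, Equiv.Perm.mul_apply, Equiv.Perm.decomposeFin_symm_apply_zero,
    Equiv.symm_apply_eq, finRotate_last]

theorem consLast_succ (τ : Equiv.Perm (Fin t)) (i : Fin t) :
    consLast τ i.succ = (τ i).castSucc := by
  rw [consLast, Equiv.Perm.mul_apply, Equiv.Perm.decomposeFin_symm_apply_succ,
    Equiv.swap_self, Equiv.refl_apply, Equiv.symm_apply_eq, finRotate_apply, Fin.coeSucc_eq_succ]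

theorem invCount_consLast (τ : Equiv.Perm (Fin t)) :
    invCount (consLast τ) = t + invCount τ := by
  rw [invCount, invCount, Finset.card_filter, Finset.card_filter]
  simp only [Fintype.sum_prod_type, Fin.sum_univ_succ, consLast_zero, consLast_succ]
  simp [Fin.castSucc_lt_last]

theorem sum_perm_eq_sum_consLast {B : Type*} [AddCommMonoid B]
    (F : Equiv.Perm (Fin (t + 1)) → B) (hF : ∀ σ, σ 0 ≠ Fin.last t → F σ = 0) :
    ∑ σ, F σ = ∑ τ, F (consLast τ) := by
  rw [← (Equiv.Perm.decomposeFin.symm.trans (Equiv.mulLeft (finRotate (t + 1)).symm)).sum_comp,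
    Fintype.sum_prod_type, Fintype.sum_eq_single 0]
  · rfl
  · intro p hp
    refine Finset.sum_eq_zero fun τ _ => hF _ ?_
    simpa [Equiv.symm_apply_eq, finRotate_last, -finRotate_symm_apply] using hp

end Inversions

section QuantumDeterminant

variable {k A : Type*} [Field k] [Ring A] [Algebra k A] {q : k} {t : ℕ}

/-- The quantum determinant as a multilinear function of the rows. -/
def qdetMultilinear (q : k) (t : ℕ) : MultilinearMap k (fun _ : Fin t => Fin t → A) A :=
  ∑ σ : Equiv.Perm (Fin t), (-q) ^ invCount σ •
    (MultilinearMap.mkPiAlgebraFin k t A).compLinearMap fun i => LinearMap.proj (σ i)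

theorem qdetMultilinear_apply (q : k) (M : Fin t → Fin t → A) :
    qdetMultilinear q t M = qdet q M := by
  simp [qdetMultilinear, qdet]

theorem qdet_update_add (q : k) (M : Fin t → Fin t → A) (i : Fin t) (v w : Fin t → A) :
    qdet q (Function.update M i (v + w)) =
      qdet q (Function.update M i v) + qdet q (Function.update M i w) := by
  simp only [← qdetMultilinear_apply, MultilinearMap.map_update_add]

theorem commute_qdet {a : A} {M : Fin t → Fin t → A} (h : ∀ i j, Commute a (M i j)) :
    Commute a (qdet q M) := by
  refine Commute.sum_right _ _ _ fun σ _ => Commute.smul_right ?_ _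
  refine Commute.list_prod_right _ _ fun x hx => ?_
  obtain ⟨i, rfl⟩ := (List.mem_ofFn' _ _).mp hx
  exact h _ _

theorem qdet_eq_of_last_col_eq_zero (N : Fin (t + 1) → Fin (t + 1) → A)
    (hN : ∀ i : Fin t, N i.succ (Fin.last t) = 0) :
    qdet q N =
      (-q) ^ t • (N 0 (Fin.last t) * qdet q fun i j : Fin t => N i.succ j.castSucc) := by
  unfold qdet
  rw [sum_perm_eq_sum_consLast, Finset.mul_sum, Finset.smul_sum]
  · refine Finset.sum_congr rfl fun τ _ => ?_
    simp only [invCount_consLast, List.ofFn_succ, List.prod_cons, consLast_zero, consLast_succ,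
      pow_add, mul_smul, mul_smul_comm]
  · intro σ hσ
    obtain ⟨i, hi⟩ := σ.surjective (Fin.last t)
    obtain ⟨i, rfl⟩ := Fin.exists_succ_eq.mpr (show i ≠ 0 by rintro rfl; exact hσ hi)
    have hzero : (0 : A) ∈ List.ofFn fun r => N r (σ r) :=
      (List.mem_ofFn' _ _).mpr ⟨i.succ, by simp only [hi, hN]⟩
    rw [List.prod_eq_zero hzero, smul_zero]

/-- The `2 × 2` quantum minor of a row `v` placed above a row `w`, in columns `j` and `l`. -/
def rowMinor (q : k) (v w : Fin t → A) (j l : Fin t) : A :=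
  v j * w l - q • (v l * w j)

theorem rowMinor_mul_right (q : k) (v w : Fin t → A) (c : A) (j l : Fin t) :
    rowMinor q v (fun r => w r * c) j l = rowMinor q v w j l * c := by
  simp only [rowMinor, sub_mul, smul_mul_assoc, mul_assoc]

theorem qdet_eq_sum_ascents (q : k) (M : Fin (t + 1) → Fin (t + 1) → A) (i : Fin t) :
    qdet q M = ∑ σ : Equiv.Perm (Fin (t + 1)) with σ i.castSucc < σ i.succ,
      (-q) ^ invCount σ • ((List.ofFn fun r => M r (σ r)).prod -
        q • (List.ofFn fun r => M r ((σ * Equiv.swap i.castSucc i.succ) r)).prod) := by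
  let s := Equiv.swap i.castSucc i.succ
  have hdescents : ∑ σ : Equiv.Perm (Fin (t + 1)) with ¬ σ i.castSucc < σ i.succ,
        (-q) ^ invCount σ • (List.ofFn fun r => M r (σ r)).prod =
      ∑ σ : Equiv.Perm (Fin (t + 1)) with σ i.castSucc < σ i.succ,
        (-q) ^ invCount (σ * s) • (List.ofFn fun r => M r ((σ * s) r)).prod := by
    refine (Finset.sum_equiv (Equiv.mulRight s) (fun σ => ?_) fun _ _ => rfl).symm
    have hne : σ i.castSucc ≠ σ i.succ := σ.injective.ne Fin.castSucc_lt_succ.ne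
    simp [s, hne.le_iff_lt]
  rw [qdet, ← Finset.sum_filter_add_sum_filter_not Finset.univ
    (fun σ : Equiv.Perm (Fin (t + 1)) => σ i.castSucc < σ i.succ), hdescents,
    ← Finset.sum_add_distrib]
  refine Finset.sum_congr rfl fun σ hσ => ?_
  rw [invCount_mul_swap (Finset.mem_filter.mp hσ).2, smul_sub, smul_smul, pow_succ, mul_neg,
    neg_smul, sub_eq_add_neg]

theorem exists_prod_sub_smul_prod_swap_eq (q : k) (N : Fin (t + 1) → Fin (t + 1) → A)
    (i : Fin t) (σ : Equiv.Perm (Fin (t + 1))) :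
    ∃ L R : A, ∀ M : Fin (t + 1) → Fin (t + 1) → A,
      (∀ r, r ≠ i.castSucc → r ≠ i.succ → M r = N r) →
      (List.ofFn fun r => M r (σ r)).prod -
          q • (List.ofFn fun r => M r ((σ * Equiv.swap i.castSucc i.succ) r)).prod =
        L * rowMinor q (M i.castSucc) (M i.succ) (σ i.castSucc) (σ i.succ) * R := by
  obtain ⟨L, R, hLR⟩ := exists_prod_ofFn_eq_mul_adjacent_mul i fun r => N r (σ r)
  refine ⟨L, R, fun M hM => ?_⟩
  rw [hLR _ fun r hr hr' => by rw [hM r hr hr'],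
    hLR _ fun r hr hr' => by
      rw [Equiv.Perm.mul_apply, Equiv.swap_apply_of_ne_of_ne hr hr', hM r hr hr']]
  simp only [Equiv.Perm.mul_apply, Equiv.swap_apply_left, Equiv.swap_apply_right, rowMinor,
    mul_sub, sub_mul, mul_smul_comm, smul_mul_assoc]

theorem qdet_eq_smul_of_adjacent_rows {M N : Fin (t + 1) → Fin (t + 1) → A} (i : Fin t) (c : k)
    (hrows : ∀ r, r ≠ i.castSucc → r ≠ i.succ → M r = N r)
    (hminors : ∀ j l, j < l → rowMinor q (M i.castSucc) (M i.succ) j l =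
      c • rowMinor q (N i.castSucc) (N i.succ) j l) :
    qdet q M = c • qdet q N := by
  rw [qdet_eq_sum_ascents q M i, qdet_eq_sum_ascents q N i, Finset.smul_sum]
  refine Finset.sum_congr rfl fun σ hσ => ?_
  obtain ⟨L, R, hLR⟩ := exists_prod_sub_smul_prod_swap_eq q N i σ
  rw [hLR M hrows, hLR N fun _ _ _ => rfl, hminors _ _ (Finset.mem_filter.mp hσ).2, smul_comm c,
    mul_smul_comm, smul_mul_assoc]

end QuantumDeterminant

section QuantumMatrix

variable {k A : Type*} [Field k] [Ring A] [Algebra k A] {q : k} {m n t : ℕ}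

theorem IsQMat.submatrix {X : Fin m → Fin n → A} (hX : IsQMat q X) {a b : ℕ}
    {f : Fin a → Fin m} {g : Fin b → Fin n} (hf : StrictMono f) (hg : StrictMono g) :
    IsQMat q fun i j => X (f i) (g j) :=
  ⟨fun _ _ _ h => hX.1 _ _ _ (hg h), fun _ _ _ h => hX.2.1 _ _ _ (hf h),
    fun _ _ _ _ h h' => hX.2.2.1 _ _ _ _ (hf h) (hg h'),
    fun _ _ _ _ h h' => hX.2.2.2 _ _ _ _ (hf h) (hg h')⟩

theorem IsQMat.map {B : Type*} [Ring B] [Algebra k B] {X : Fin m → Fin n → A} (hX : IsQMat q X)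
    (φ : A →ₐ[k] B) : IsQMat q fun i j => φ (X i j) := by
  obtain ⟨hrow, hcol, hanti, hdiag⟩ := hX
  refine ⟨fun i j l h => ?_, fun i r j h => ?_, fun i r j l h h' => ?_, fun i r j l h h' => ?_⟩
  · rw [← map_mul, hrow i j l h, map_smul, map_mul]
  · rw [← map_mul, hcol i r j h, map_smul, map_mul]
  · rw [← map_mul, hanti i r j l h h', map_mul]
  · rw [← map_mul, ← map_mul, ← map_sub, hdiag i r j l h h', map_smul, map_mul]

theorem isQMat_qX (k : Type*) [Field k] (q : k) (m n : ℕ) : IsQMat q (qX k q m n) := by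
  refine ⟨fun i j l h => ?_, fun i r j h => ?_, fun i r j l h h' => ?_, fun i r j l h h' => ?_⟩
  · simpa only [qX, map_mul, map_smul] using
      RingQuot.mkAlgHom_rel k (QMRel.row (q := q) i j l h)
  · simpa only [qX, map_mul, map_smul] using
      RingQuot.mkAlgHom_rel k (QMRel.col (q := q) i r j h)
  · simpa only [qX, map_mul] using
      RingQuot.mkAlgHom_rel k (QMRel.anti (q := q) i r j l h h')
  · rw [sub_eq_iff_eq_add']
    simpa only [qX, map_add, map_mul, map_smul] using
      RingQuot.mkAlgHom_rel k (QMRel.diag (q := q) i r j l h h')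

theorem IsQMat.rowMinor_self {X : Fin m → Fin n → A} (hX : IsQMat q X) (i : Fin m)
    {j l : Fin n} (hjl : j < l) : rowMinor q (X i) (X i) j l = 0 :=
  sub_eq_zero.mpr (hX.1 i j l hjl)

theorem IsQMat.rowMinor_swap {X : Fin m → Fin n → A} (hX : IsQMat q X) (hq : q ≠ 0)
    {i r : Fin m} {j l : Fin n} (hir : i < r) (hjl : j < l) :
    rowMinor q (X r) (X i) j l = -q • rowMinor q (X i) (X r) j l := by
  have hanti : X r j * X i l = X i l * X r j := (hX.2.2.1 i r j l hir hjl).symm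
  have hdiag : X r l * X i j = X i j * X r l - (q - q⁻¹) • (X i l * X r j) := by
    rw [← hX.2.2.2 i r j l hir hjl, sub_sub_cancel]
  rw [rowMinor, rowMinor, hanti, hdiag]
  match_scalars <;> field_simp
  ring

theorem IsQMat.qdet_eq_zero_of_row_eq_mul {X : Fin (t + 1) → Fin (t + 1) → A} (hX : IsQMat q X)
    (hq : q ≠ 0) (r : Fin t) (c : A) {M : Fin (t + 1) → Fin (t + 1) → A}
    (hM : ∀ i ≤ r.castSucc, M i = X i) (hr : M r.succ = fun j => X 0 j * c) : qdet q M = 0 := by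
  obtain _ | t := t
  · exact r.elim0
  induction r using Fin.induction generalizing c M with
  | zero =>
    rw [← zero_smul k (qdet q M)]
    refine qdet_eq_smul_of_adjacent_rows 0 0 (fun _ _ _ => rfl) fun j l hjl => ?_
    rw [hr, hM _ le_rfl, rowMinor_mul_right, Fin.castSucc_zero, hX.rowMinor_self 0 hjl, zero_mul,
      zero_smul]
  | succ r ih =>
    let a := r.succ.castSucc
    let b := r.succ.succ
    have hab : a ≠ b := Fin.castSucc_lt_succ.ne
    have ha : 0 < a := Fin.castSucc_pos_iff.mpr r.succ_pos
    let N := Function.update (Function.update M a (X 0)) b fun j => X a j * c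
    have hNa : N a = X 0 := by simp [N, hab]
    have hNb : N b = fun j => X a j * c := by simp [N]
    have hN : ∀ i, i ≠ a → i ≠ b → N i = M i := fun i hi hi' => by simp [N, hi, hi']
    have hexchange : qdet q M = -q • qdet q N := by
      refine qdet_eq_smul_of_adjacent_rows r.succ (-q) (fun i hi hi' => (hN i hi hi').symm)
        fun j l hjl => ?_
      change rowMinor q (M a) (M b) j l = -q • rowMinor q (N a) (N b) j l
      rw [hNa, hNb, hM a le_rfl, hr, rowMinor_mul_right, rowMinor_mul_right,
        hX.rowMinor_swap hq ha hjl, smul_mul_assoc]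
    have hvanish : qdet q N = 0 := by
      refine ih 1 (fun i hi => ?_) ?_
      · have hia : i < a := hi.trans_lt (by simp [a, Fin.lt_def])
        rw [hN i hia.ne (hia.trans Fin.castSucc_lt_succ).ne, hM i hia.le]
      · rw [Fin.succ_castSucc]
        exact hNa.trans (by simp only [mul_one])
    rw [hexchange, hvanish, smul_zero]

theorem IsQMat.qdet_update_add_row_zero_mul {X : Fin (t + 1) → Fin (t + 1) → A}
    (hX : IsQMat q X) (hq : q ≠ 0) (r : Fin t) (c : A) {M : Fin (t + 1) → Fin (t + 1) → A}
    (hM : ∀ i ≤ r.succ, M i = X i) :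
    qdet q (Function.update M r.succ (X r.succ + fun j => X 0 j * c)) = qdet q M := by
  rw [qdet_update_add, ← hM r.succ le_rfl, Function.update_eq_self, add_eq_left]
  refine hX.qdet_eq_zero_of_row_eq_mul hq r c (fun i hi => ?_) (Function.update_self ..)
  have hir : i < r.succ := hi.trans_lt Fin.castSucc_lt_succ
  rw [Function.update_of_ne hir.ne, hM i hir.le]

theorem IsQMat.qdet_add_row_zero_mul {X : Fin (t + 1) → Fin (t + 1) → A} (hX : IsQMat q X)
    (hq : q ≠ 0) {c : Fin (t + 1) → A} (hc : c 0 = 0) :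
    qdet q (fun i j => X i j + X 0 j * c i) = qdet q X := by
  let Y : Fin (t + 1) → Fin (t + 1) → Fin (t + 1) → A := fun r i =>
    if i ≤ r then X i else fun j => X i j + X 0 j * c i
  have hY_last : Y (Fin.last t) = X := funext fun i => if_pos i.le_last
  have hY_zero : Y 0 = fun i j => X i j + X 0 j * c i := by
    funext i j
    by_cases hi : i = 0 <;> simp [Y, hi, hc]
  have hY_update : ∀ r : Fin t, Y r.castSucc =
      Function.update (Y r.succ) r.succ (X r.succ + fun j => X 0 j * c r.succ) := by
    intro r
    funext i
    obtain rfl | hi := eq_or_ne i r.succ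
    · simp [Y, Pi.add_def]
    · have hle : i ≤ r.castSucc ↔ i ≤ r.succ := by
        rw [Fin.le_castSucc_iff, hi.le_iff_lt]
      simp [Y, hi, hle]
  have hY_step : ∀ r : Fin t, qdet q (Y r.castSucc) = qdet q (Y r.succ) := fun r => by
    rw [hY_update, hX.qdet_update_add_row_zero_mul hq r _ fun _ hi => if_pos hi]
  have hY : ∀ r, qdet q (Y r) = qdet q (Y 0) := by
    intro r
    induction r using Fin.induction with
    | zero => rfl
    | succ r ih => rw [← hY_step, ih]
  rw [← hY_zero, ← hY (Fin.last t), hY_last]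

/-- The matrix `X'` attached to an arbitrary `X`, with `v` standing for the inverse of the corner
entry `X 0 (Fin.last n)`. For a quantum matrix it is the Schur complement of that entry, since
`q⁻¹ X_{1j} X_{in} X_{1n}⁻¹ = X_{1j} X_{1n}⁻¹ X_{in}`. -/
def cornerSchur (q : k) (X : Fin (m + 1) → Fin (n + 1) → A) (v : A) (i : Fin m) (j : Fin n) : A :=
  X i.succ j.castSucc - q⁻¹ • (X 0 j.castSucc * X i.succ (Fin.last n) * v)

theorem IsQMat.commute_cornerSchur {X : Fin (m + 1) → Fin (n + 1) → A} (hX : IsQMat q X)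
    (hq : q ≠ 0) {u : Aˣ} (hu : (u : A) = X 0 (Fin.last n)) (i : Fin m) (j : Fin n) :
    Commute (u : A) (cornerSchur q X ↑u⁻¹ i j) := by
  have hanti : Commute (u : A) (X i.succ j.castSucc) := by
    rw [hu]
    exact hX.2.2.1 0 i.succ j.castSucc (Fin.last n) i.succ_pos (Fin.castSucc_lt_last j)
  have hrow := hX.1 0 j.castSucc (Fin.last n) (Fin.castSucc_lt_last j)
  have hcol := hX.2.1 0 i.succ (Fin.last n) i.succ_pos
  rw [← hu] at hrow hcol
  have hprod : Commute (u : A) (X 0 j.castSucc * X i.succ (Fin.last n)) := by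
    refine smul_right_injective A hq ?_
    change q • ((u : A) * (X 0 j.castSucc * X i.succ (Fin.last n))) =
      q • (X 0 j.castSucc * X i.succ (Fin.last n) * u)
    rw [← mul_assoc, ← smul_mul_assoc, ← hrow, mul_assoc, hcol, mul_smul_comm, mul_assoc]
  exact hanti.sub_right
    ((hprod.mul_right (Commute.refl (u : A)).units_inv_right).smul_right q⁻¹)

theorem IsQMat.qdet_eq_smul_corner_mul_qdet_cornerSchur {X : Fin (t + 1) → Fin (t + 1) → A}
    (hX : IsQMat q X) (hq : q ≠ 0) {v : A} (hv : X 0 (Fin.last t) * v = 1) :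
    qdet q X = (-q) ^ t • (X 0 (Fin.last t) * qdet q (cornerSchur q X v)) := by
  let c : Fin (t + 1) → A := Fin.cons 0 fun i => -(q⁻¹ • (X i.succ (Fin.last t) * v))
  have hcolumn : ∀ i : Fin t,
      X i.succ (Fin.last t) + X 0 (Fin.last t) * c i.succ = 0 := by
    intro i
    have hcol := hX.2.1 0 i.succ (Fin.last t) i.succ_pos
    simp only [c, Fin.cons_succ, mul_neg, mul_smul_comm, ← mul_assoc, hcol, smul_mul_assoc]
    rw [mul_assoc, hv, mul_one, inv_smul_smul₀ hq, add_neg_cancel]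
  have hschur : (fun i j : Fin t => X i.succ j.castSucc + X 0 j.castSucc * c i.succ) =
      cornerSchur q X v := by
    funext i j
    simp only [c, Fin.cons_succ, cornerSchur, mul_neg, mul_smul_comm, mul_assoc, sub_eq_add_neg]
  rw [← hX.qdet_add_row_zero_mul hq (Fin.cons_zero ..), qdet_eq_of_last_col_eq_zero _ hcolumn,
    hschur]
  simp

theorem IsQMat.qdet_cornerSchur {X : Fin (t + 1) → Fin (t + 1) → A} (hX : IsQMat q X)
    (hq : q ≠ 0) {u : Aˣ} (hu : (u : A) = X 0 (Fin.last t)) :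
    qdet q (cornerSchur q X ↑u⁻¹) = (-q) ^ (-(t : ℤ)) • (qdet q X * ↑u⁻¹) ∧
      qdet q (cornerSchur q X ↑u⁻¹) = (-q) ^ (-(t : ℤ)) • (↑u⁻¹ * qdet q X) := by
  have hcomm : Commute (u : A) (qdet q (cornerSchur q X ↑u⁻¹)) :=
    commute_qdet (hX.commute_cornerSchur hq hu)
  have hpow : (-q) ^ t ≠ 0 := pow_ne_zero t (neg_ne_zero.mpr hq)
  rw [hX.qdet_eq_smul_corner_mul_qdet_cornerSchur hq (v := ↑u⁻¹) (by rw [← hu, u.mul_inv]), ← hu,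
    zpow_neg, zpow_natCast]
  constructor
  · rw [hcomm.eq, smul_mul_assoc, Units.mul_inv_cancel_right, inv_smul_smul₀ hpow]
  · rw [mul_smul_comm, Units.inv_mul_cancel_left, inv_smul_smul₀ hpow]

end QuantumMatrix

theorem orderEmbOfFin_eq_cons {m t : ℕ} {I : Finset (Fin (m + 1))} {I' : Finset (Fin m)}
    (hIc : I.card = t + 1) (hI'c : I'.card = t) (h0 : 0 ∈ I) (hI' : ∀ a, a ∈ I' ↔ a.succ ∈ I) :
    ⇑(I.orderEmbOfFin hIc) = Fin.cons 0 (Fin.succ ∘ I'.orderEmbOfFin hI'c) := by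
  refine (Finset.orderEmbOfFin_unique hIc (fun x => ?_) ?_).symm
  · cases x using Fin.cases with
    | zero => exact h0
    | succ i => exact (hI' _).mp (Finset.orderEmbOfFin_mem I' hI'c i)
  · exact Fin.strictMono_cons.mpr ⟨fun i => Fin.succ_pos _,
      Fin.strictMono_succ.comp (I'.orderEmbOfFin hI'c).strictMono⟩

theorem orderEmbOfFin_eq_snoc {n t : ℕ} {J : Finset (Fin (n + 1))} {J' : Finset (Fin n)}
    (hJc : J.card = t + 1) (hJ'c : J'.card = t) (hlast : Fin.last n ∈ J)
    (hJ' : ∀ b, b ∈ J' ↔ b.castSucc ∈ J) :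
    ⇑(J.orderEmbOfFin hJc) = Fin.snoc (Fin.castSucc ∘ J'.orderEmbOfFin hJ'c) (Fin.last n) := by
  refine (Finset.orderEmbOfFin_unique hJc (fun x => ?_) fun x y hxy => ?_).symm
  · cases x using Fin.lastCases with
    | last => simpa using hlast
    | cast i => simpa using (hJ' _).mp (Finset.orderEmbOfFin_mem J' hJ'c i)
  · cases x using Fin.lastCases with
    | last => exact absurd hxy (Fin.le_last y).not_gt
    | cast i =>
      cases y using Fin.lastCases with
      | last => simp [Fin.castSucc_lt_last]
      | cast j => simpa using hxy

theorem qminor_reduction_general {k A : Type*} [Field k] [Ring A] [Algebra k A] {q : k}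
    (hq : q ≠ 0) {m n t : ℕ} {X : Fin (m + 1) → Fin (n + 1) → A} (hX : IsQMat q X) {u : Aˣ}
    (hu : (u : A) = X 0 (Fin.last n)) {I : Finset (Fin (m + 1))} {J : Finset (Fin (n + 1))}
    (hIc : I.card = t + 1) (hJc : J.card = t + 1) (h0 : 0 ∈ I) (hlast : Fin.last n ∈ J)
    {I' : Finset (Fin m)} {J' : Finset (Fin n)} (hI' : ∀ a, a ∈ I' ↔ a.succ ∈ I)
    (hJ' : ∀ b, b ∈ J' ↔ b.castSucc ∈ J) (hI'c : I'.card = t) (hJ'c : J'.card = t) :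
    qminor q (cornerSchur q X ↑u⁻¹) I' J' hI'c hJ'c =
        (-q) ^ (-(t : ℤ)) • (qminor q X I J hIc hJc * ↑u⁻¹) ∧
      qminor q (cornerSchur q X ↑u⁻¹) I' J' hI'c hJ'c =
        (-q) ^ (-(t : ℤ)) • (↑u⁻¹ * qminor q X I J hIc hJc) := by
  let Y : Fin (t + 1) → Fin (t + 1) → A := fun a b =>
    X (I.orderEmbOfFin hIc a) (J.orderEmbOfFin hJc b)
  have hY : IsQMat q Y :=
    hX.submatrix (I.orderEmbOfFin hIc).strictMono (J.orderEmbOfFin hJc).strictMono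
  have hrows := orderEmbOfFin_eq_cons hIc hI'c h0 hI'
  have hcols := orderEmbOfFin_eq_snoc hJc hJ'c hlast hJ'
  have hcorner : (u : A) = Y 0 (Fin.last t) := by simp [Y, hrows, hcols, hu]
  have hschur : qminor q (cornerSchur q X ↑u⁻¹) I' J' hI'c hJ'c =
      qdet q (cornerSchur q Y ↑u⁻¹) := by
    unfold qminor cornerSchur
    simp [Y, hrows, hcols]
  rw [hschur]
  exact hY.qdet_cornerSchur hq hcorner

/-- Reduction of quantum minors: for `I` containing row `1` and `J` containing column `n`,
`[I'|J']' = (-q)^{1-p} [I|J] X_{1n}⁻¹ = (-q)^{1-p} X_{1n}⁻¹ [I|J]` in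
`O_q(M_{m,n})[X_{1n}⁻¹]`, where `I' = I∖{1}`, `J' = J∖{n}`. -/
theorem qminor_reduction {k B : Type*} [Field k] [Ring B] [Algebra k B]
    (q : k) (hq : q ≠ 0) {m n : ℕ} (hm : 2 ≤ m) (hn : 2 ≤ n)
    (φ : OqM k q m n →ₐ[k] B) (hφ : Function.Injective φ) (u : B)
    (hu1 : φ (qX k q m n ⟨0, by omega⟩ ⟨n - 1, by omega⟩) * u = 1)
    (hu2 : u * φ (qX k q m n ⟨0, by omega⟩ ⟨n - 1, by omega⟩) = 1)
    (hloc : ∀ b : B, ∃ (a : OqM k q m n) (p : ℕ), b = φ a * u ^ p)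
    (p : ℕ) (hp : 2 ≤ p)
    (I : Finset (Fin m)) (J : Finset (Fin n)) (hIc : I.card = p) (hJc : J.card = p)
    (h1I : (⟨0, by omega⟩ : Fin m) ∈ I) (hnJ : (⟨n - 1, by omega⟩ : Fin n) ∈ J)
    (I' : Finset (Fin (m - 1))) (J' : Finset (Fin (n - 1)))
    (hI' : ∀ a : Fin (m - 1),
      a ∈ I' ↔ (⟨(a : ℕ) + 1, by have := a.isLt; omega⟩ : Fin m) ∈ I)
    (hJ' : ∀ b : Fin (n - 1),
      b ∈ J' ↔ (⟨(b : ℕ), by have := b.isLt; omega⟩ : Fin n) ∈ J)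
    (hI'c : I'.card = p - 1) (hJ'c : J'.card = p - 1) :
    qminor q (fun (a : Fin (m - 1)) (b : Fin (n - 1)) =>
          Xp q (by omega) (by omega) φ u ⟨(a : ℕ) + 1, by have := a.isLt; omega⟩
            ⟨(b : ℕ), by have := b.isLt; omega⟩) I' J' hI'c hJ'c
        = ((-q) ^ ((1 : ℤ) - (p : ℤ))) •
            (qminor q (fun i j => φ (qX k q m n i j)) I J hIc hJc * u) ∧
    qminor q (fun (a : Fin (m - 1)) (b : Fin (n - 1)) =>
          Xp q (by omega) (by omega) φ u ⟨(a : ℕ) + 1, by have := a.isLt; omega⟩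
            ⟨(b : ℕ), by have := b.isLt; omega⟩) I' J' hI'c hJ'c
        = ((-q) ^ ((1 : ℤ) - (p : ℤ))) •
            (u * qminor q (fun i j => φ (qX k q m n i j)) I J hIc hJc) := by
  obtain ⟨m, rfl⟩ : ∃ m', m = m' + 1 := ⟨m - 1, by omega⟩
  obtain ⟨n, rfl⟩ : ∃ n', n = n' + 1 := ⟨n - 1, by omega⟩
  obtain ⟨t, rfl⟩ : ∃ t, p = t + 1 := ⟨p - 1, by omega⟩
  rw [show (1 : ℤ) - ((t + 1 : ℕ) : ℤ) = -t by push_cast; ring]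
  exact qminor_reduction_general hq ((isQMat_qX k q (m + 1) (n + 1)).map φ)
    (u := ⟨_, u, hu1, hu2⟩) rfl hIc hJc h1I hnJ hI' hJ' hI'c hJ'c
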